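/- (Norm bound for the Volterra operator) Under the assumptions: 0 < α ≤ 1, ψ increasing C¹ on I = [a,b], L > 0, M ≥ 0, δ > 1, ξ = Lδ, f and k continuous with ‖f(t,u,v)−f(t,ū,v̄)‖ ≤ M(‖u−ū‖+‖v−v̄‖), ‖k(t,s,u)−k(t,s,ū)‖ ≤ L‖u−ū‖, and d₁ = ‖t ↦ f(t,0,(1/Γ(α))∫_a^t ψ'(s)(ψ(t)−ψ(s))^{α−1}k(t,s,0)ds)‖_{ξ,∞} < ∞; define (Tx)(t) = f(t, x(t), (1/Γ(α))∫_a^t ψ'(s)(ψ(t)−ψ(s))^{α−1}k(t,s,x(s))ds). Then for every continuous x : I → ℝⁿ, ‖Tx‖_{ξ,∞} ≤ d₁ + M(1 + 1/δ)‖x‖_{ξ,∞}; in particular T maps C_ξ(I,ℝⁿ) into itself. -/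

import Mathlib

open MeasureTheory Set

/-- One-parameter Mittag-Leffler function `E_α(z) = ∑ z^k / Γ(αk+1)`. -/
noncomputable def ML (α z : ℝ) : ℝ := ∑' k : ℕ, z ^ k / Real.Gamma (α * k + 1)

/-- The inner Volterra integral operator. -/
noncomputable def volterraK {n : ℕ} (α : ℝ) (ψ : ℝ → ℝ) (a : ℝ)
    (k : ℝ → ℝ → EuclideanSpace ℝ (Fin n) → EuclideanSpace ℝ (Fin n))
    (x : ℝ → EuclideanSpace ℝ (Fin n)) (t : ℝ) : EuclideanSpace ℝ (Fin n) :=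
  (Real.Gamma α)⁻¹ • ∫ s in a..t, (deriv ψ s * (ψ t - ψ s) ^ (α - 1)) • k t s (x s)

/-- The weighted sup-norm `‖·‖_{ξ,∞}` of a function on `[a,b]`. -/
noncomputable def nXi {n : ℕ} (a b ξ α : ℝ) (ψ : ℝ → ℝ)
    (x : ℝ → EuclideanSpace ℝ (Fin n)) : ℝ :=
  ⨆ t : Icc a b, ‖x t.1‖ / ML α (ξ * (ψ t.1 - ψ a) ^ α)

/-
Write `E(t) = E_α(ξ(ψ(t) - ψ(a))^α)` for the weight. Integrating the Mittag-Leffler series term by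
term against the singular kernel (each term is a Beta integral after the substitution `u = ψ(s)`)
gives `I^{α,ψ} E = ξ⁻¹ (E - 1)`, so the fractional integral scales the weighted norm by at most
`1/ξ`. The Lipschitz bound on `k` then yields `‖Kx - K0‖ ≤ (L/ξ) ‖x‖_{ξ,∞} E` pointwise, and the
Lipschitz bound on `f` compares `Tx` with `t ↦ f(t, 0, (K0)(t))`.
-/

section MittagLeffler

theorem exp_neg_mul_rpow_le_Gamma_add_one {s r : ℝ} (hs : 0 ≤ s) (hr : 0 ≤ r) :
    Real.exp (-r) * r ^ s ≤ Real.Gamma (s + 1) := by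
  have hconv : IntegrableOn (fun x : ℝ => Real.exp (-x) * x ^ s) (Ioi 0) := by
    simpa using Real.GammaIntegral_convergent (add_pos_of_nonneg_of_pos hs one_pos)
  have hsub : Ioi r ⊆ Ioi (0 : ℝ) := Ioi_subset_Ioi hr
  calc Real.exp (-r) * r ^ s = ∫ x in Ioi r, Real.exp (-x) * r ^ s := by
        rw [integral_mul_const, integral_exp_neg_Ioi]
    _ ≤ ∫ x in Ioi r, Real.exp (-x) * x ^ s := by
        refine setIntegral_mono_on ((integrableOn_exp_neg_Ioi r).mul_const _)
          (hconv.mono_set hsub) measurableSet_Ioi fun x (hx : r < x) => ?_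
        gcongr
    _ ≤ ∫ x in Ioi 0, Real.exp (-x) * x ^ s := by
        refine setIntegral_mono_set hconv ?_ hsub.eventuallyLE
        filter_upwards [ae_restrict_mem measurableSet_Ioi] with x hx
        exact mul_nonneg (Real.exp_nonneg _) (Real.rpow_nonneg (mem_Ioi.1 hx).le _)
    _ = Real.Gamma (s + 1) := by
        rw [Real.Gamma_eq_integral (by positivity), add_sub_cancel_right]

variable {α z : ℝ}

theorem Gamma_mul_natCast_add_one_pos (hα : 0 ≤ α) (k : ℕ) : 0 < Real.Gamma (α * k + 1) :=
  Real.Gamma_pos_of_pos (by positivity)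

theorem summable_ML (hα : 0 < α) (z : ℝ) :
    Summable fun k : ℕ => z ^ k / Real.Gamma (α * k + 1) := by
  -- With `r ^ α = 2|z| + 1` the lower bound `Γ(αk + 1) ≥ e^{-r} r^{αk}` gives a geometric majorant.
  set r : ℝ := (2 * |z| + 1) ^ α⁻¹
  have hr : 0 ≤ r := by positivity
  have hrα : r ^ α = 2 * |z| + 1 := Real.rpow_inv_rpow (by positivity) hα.ne'
  have hratio : |z| / (2 * |z| + 1) < 1 := by
    rw [div_lt_one (by positivity)]
    linarith [abs_nonneg z]
  refine .of_norm_bounded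
    ((summable_geometric_of_lt_one (by positivity) hratio).mul_left (Real.exp r)) fun k => ?_
  have hΓ : Real.exp (-r) * (2 * |z| + 1) ^ k ≤ Real.Gamma (α * k + 1) := by
    simpa only [Real.rpow_mul hr, hrα, Real.rpow_natCast]
      using exp_neg_mul_rpow_le_Gamma_add_one (by positivity : 0 ≤ α * k) hr
  calc ‖z ^ k / Real.Gamma (α * k + 1)‖ = |z| ^ k / Real.Gamma (α * k + 1) := by
        rw [norm_div, norm_pow, Real.norm_eq_abs,
          Real.norm_of_nonneg (Gamma_mul_natCast_add_one_pos hα.le k).le]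
    _ ≤ |z| ^ k / (Real.exp (-r) * (2 * |z| + 1) ^ k) := by gcongr
    _ = Real.exp r * (|z| / (2 * |z| + 1)) ^ k := by
        rw [Real.exp_neg, div_pow]
        field_simp

theorem ML_eq_one_add_tsum (hα : 0 < α) (z : ℝ) :
    ML α z = 1 + ∑' k : ℕ, z ^ (k + 1) / Real.Gamma (α * ↑(k + 1) + 1) := by
  rw [ML, (summable_ML hα z).tsum_eq_zero_add]
  simp

theorem one_le_ML (hα : 0 < α) (hz : 0 ≤ z) : 1 ≤ ML α z := by
  rw [ML_eq_one_add_tsum hα, le_add_iff_nonneg_right]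
  exact tsum_nonneg fun k =>
    div_nonneg (pow_nonneg hz _) (Gamma_mul_natCast_add_one_pos hα.le _).le

theorem continuous_ML (hα : 0 < α) : Continuous (ML α) := by
  refine continuous_iff_continuousAt.2 fun z => ?_
  have hcont : ContinuousOn (ML α) (Metric.closedBall 0 (|z| + 1)) := by
    refine continuousOn_tsum (fun k => by fun_prop) (summable_ML hα (|z| + 1)) fun k w hw => ?_
    have hΓ := Gamma_mul_natCast_add_one_pos hα.le k
    rw [norm_div, norm_pow, Real.norm_of_nonneg hΓ.le]
    gcongr
    exact mem_closedBall_zero_iff.1 hw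
  refine hcont.continuousAt (Metric.closedBall_mem_nhds_of_mem ?_)
  simp

end MittagLeffler

theorem integral_rpow_mul_sub_rpow {u v T : ℝ} (hu : 0 < u) (hv : 0 < v) (hT : 0 < T) :
    ∫ x in 0..T, x ^ (u - 1) * (T - x) ^ (v - 1) =
      T ^ (u + v - 1) * (Real.Gamma u * Real.Gamma v / Real.Gamma (u + v)) := by
  apply Complex.ofReal_injective
  calc ((∫ x in 0..T, x ^ (u - 1) * (T - x) ^ (v - 1) : ℝ) : ℂ)
      = ∫ x in 0..T, (x : ℂ) ^ ((u : ℂ) - 1) * ((T : ℂ) - x) ^ ((v : ℂ) - 1) := by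
        rw [← intervalIntegral.integral_ofReal]
        refine intervalIntegral.integral_congr fun x hx => ?_
        rw [uIcc_of_le hT.le] at hx
        simp [Complex.ofReal_cpow hx.1, Complex.ofReal_cpow (sub_nonneg.2 hx.2)]
    _ = (T : ℂ) ^ ((u : ℂ) + v - 1) *
          (Complex.Gamma u * Complex.Gamma v / Complex.Gamma (u + v)) := by
        rw [Complex.betaIntegral_scaled _ _ hT,
          Complex.betaIntegral_eq_Gamma_mul_div _ _ (by simpa) (by simpa)]
    _ = ((T ^ (u + v - 1) * (Real.Gamma u * Real.Gamma v / Real.Gamma (u + v)) : ℝ) : ℂ) := by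
        simp [Complex.ofReal_cpow hT.le, ← Complex.Gamma_ofReal]

section FractionalIntegral

/-- The kernel `ψ'(s) (ψ(t) - ψ(s))^{α-1}` of the fractional integral with respect to `ψ`, without
the factor `1/Γ(α)`. -/
noncomputable def fracKernel (α : ℝ) (ψ : ℝ → ℝ) (t s : ℝ) : ℝ :=
  deriv ψ s * (ψ t - ψ s) ^ (α - 1)

/-- The Riemann–Liouville fractional integral `I_{a+}^{α,ψ} g` of order `α` with respect to `ψ`, for
functions with values in any real normed space. -/
noncomputable def fracIntegral {E : Type*} [NormedAddCommGroup E] [NormedSpace ℝ E]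
    (α : ℝ) (ψ : ℝ → ℝ) (a : ℝ) (g : ℝ → E) (t : ℝ) : E :=
  (Real.Gamma α)⁻¹ • ∫ s in a..t, fracKernel α ψ t s • g s

variable {E : Type*} [NormedAddCommGroup E] [NormedSpace ℝ E] {α ξ β a t : ℝ} {ψ : ℝ → ℝ}

theorem deriv_nonneg_of_monotoneOn_Icc (hmono : MonotoneOn ψ (Icc a t)) :
    ∀ s ∈ Ioo a t, 0 ≤ deriv ψ s := fun s hs => by
  rw [← derivWithin_of_mem_nhds (Icc_mem_nhds hs.1 hs.2)]
  exact hmono.derivWithin_nonneg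

theorem ae_fracKernel_nonneg (hmono : MonotoneOn ψ (Icc a t)) :
    ∀ᵐ s, s ∈ Ioc a t → 0 ≤ fracKernel α ψ t s := by
  filter_upwards [Measure.ae_ne volume t] with s hst hs
  have hs' : s ∈ Ioo a t := ⟨hs.1, hs.2.lt_of_ne hst⟩
  have hψ : ψ s ≤ ψ t :=
    hmono (Ioo_subset_Icc_self hs') (right_mem_Icc.2 (hs.1.le.trans hs.2)) hs.2
  exact mul_nonneg (deriv_nonneg_of_monotoneOn_Icc hmono s hs')
    (Real.rpow_nonneg (sub_nonneg.2 hψ) _)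

theorem intervalIntegrable_fracKernel (hα : 0 < α) (hat : a ≤ t) (hmono : MonotoneOn ψ (Icc a t))
    (hcont : ContinuousOn ψ (Icc a t)) (hdiff : DifferentiableOn ℝ ψ (Ioo a t)) :
    IntervalIntegrable (fracKernel α ψ t) volume a t := by
  have hrpow : IntervalIntegrable (fun u => (ψ t - u) ^ (α - 1)) volume (ψ a) (ψ t) := by
    have h := (intervalIntegral.intervalIntegrable_rpow' (a := ψ t - ψ a) (b := 0)
      (by linarith : -1 < α - 1)).comp_sub_left (ψ t)
    simpa using h
  refine (intervalIntegral.integrable_deriv_smul_comp_iff_of_deriv_nonneg ?_ ?_ ?_).2 hrpow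
  · rwa [uIcc_of_le hat]
  · rw [min_eq_left hat, max_eq_right hat]
    exact fun s hs => (hdiff.differentiableAt (Ioo_mem_nhds hs.1 hs.2)).hasDerivAt
  · rw [min_eq_left hat, max_eq_right hat]
    exact deriv_nonneg_of_monotoneOn_Icc hmono

theorem integral_fracKernel_smul_comp (hat : a ≤ t) (hmono : MonotoneOn ψ (Icc a t))
    (hcont : ContinuousOn ψ (Icc a t)) (hdiff : DifferentiableOn ℝ ψ (Ioo a t)) (g : ℝ → E) :
    ∫ s in a..t, fracKernel α ψ t s • g (ψ s) =
      ∫ u in ψ a..ψ t, (ψ t - u) ^ (α - 1) • g u := by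
  simp only [fracKernel, mul_smul]
  refine intervalIntegral.integral_deriv_smul_comp_of_deriv_nonneg
    (g := fun u => (ψ t - u) ^ (α - 1) • g u) ?_ ?_ ?_
  · rwa [uIcc_of_le hat]
  · rw [min_eq_left hat, max_eq_right hat]
    exact fun s hs => (hdiff.differentiableAt (Ioo_mem_nhds hs.1 hs.2)).hasDerivAt
  · rw [min_eq_left hat, max_eq_right hat]
    exact deriv_nonneg_of_monotoneOn_Icc hmono

theorem intervalIntegrable_fracKernel_smul (hα : 0 < α) (hat : a ≤ t)
    (hmono : MonotoneOn ψ (Icc a t)) (hcont : ContinuousOn ψ (Icc a t))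
    (hdiff : DifferentiableOn ℝ ψ (Ioo a t)) {g : ℝ → E} (hg : ContinuousOn g (Icc a t)) :
    IntervalIntegrable (fun s => fracKernel α ψ t s • g s) volume a t :=
  (intervalIntegrable_fracKernel hα hat hmono hcont hdiff).smul_continuousOn
    (by rwa [uIcc_of_le hat])

theorem fracIntegral_congr (hat : a ≤ t) {g h : ℝ → E} (hgh : EqOn g h (Icc a t)) :
    fracIntegral α ψ a g t = fracIntegral α ψ a h t := by
  rw [fracIntegral, fracIntegral]
  congr 1
  refine intervalIntegral.integral_congr fun s hs => ?_
  rw [uIcc_of_le hat] at hs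
  exact congrArg _ (hgh hs)

theorem fracIntegral_sub (hα : 0 < α) (hat : a ≤ t) (hmono : MonotoneOn ψ (Icc a t))
    (hcont : ContinuousOn ψ (Icc a t)) (hdiff : DifferentiableOn ℝ ψ (Ioo a t)) {g h : ℝ → E}
    (hg : ContinuousOn g (Icc a t)) (hh : ContinuousOn h (Icc a t)) :
    fracIntegral α ψ a (fun s => g s - h s) t =
      fracIntegral α ψ a g t - fracIntegral α ψ a h t := by
  simp only [fracIntegral, smul_sub]
  rw [intervalIntegral.integral_sub
    (intervalIntegrable_fracKernel_smul hα hat hmono hcont hdiff hg)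
    (intervalIntegrable_fracKernel_smul hα hat hmono hcont hdiff hh), smul_sub]

theorem fracIntegral_smul (c : ℝ) (g : ℝ → E) :
    fracIntegral α ψ a (fun s => c • g s) t = c • fracIntegral α ψ a g t := by
  simp only [fracIntegral, smul_comm _ c, intervalIntegral.integral_smul]

theorem norm_fracIntegral_le (hα : 0 < α) (hat : a ≤ t) (hmono : MonotoneOn ψ (Icc a t))
    (hcont : ContinuousOn ψ (Icc a t)) (hdiff : DifferentiableOn ℝ ψ (Ioo a t)) {g : ℝ → E}
    {φ : ℝ → ℝ} (hφ : ContinuousOn φ (Icc a t)) (hgφ : ∀ s ∈ Icc a t, ‖g s‖ ≤ φ s) :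
    ‖fracIntegral α ψ a g t‖ ≤ fracIntegral α ψ a φ t := by
  rw [fracIntegral, norm_smul,
    Real.norm_of_nonneg (inv_nonneg.2 (Real.Gamma_nonneg_of_nonneg hα.le))]
  refine mul_le_mul_of_nonneg_left (intervalIntegral.norm_integral_le_of_norm_le hat ?_
    (intervalIntegrable_fracKernel_smul hα hat hmono hcont hdiff hφ))
    (inv_nonneg.2 (Real.Gamma_nonneg_of_nonneg hα.le))
  filter_upwards [ae_fracKernel_nonneg hmono] with s hker hs
  rw [norm_smul, Real.norm_of_nonneg (hker hs)]
  exact mul_le_mul_of_nonneg_left (hgφ s (Ioc_subset_Icc_self hs)) (hker hs)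

theorem hasSum_fracIntegral [CompleteSpace E] (hα : 0 < α) (hat : a ≤ t)
    (hmono : MonotoneOn ψ (Icc a t)) (hcont : ContinuousOn ψ (Icc a t))
    (hdiff : DifferentiableOn ℝ ψ (Ioo a t))
    {g : ℕ → ℝ → E} {c : ℕ → ℝ} (hg : ∀ k, ContinuousOn (g k) (Icc a t)) (hc : Summable c)
    (hgc : ∀ k, ∀ s ∈ Icc a t, ‖g k s‖ ≤ c k) :
    HasSum (fun k => fracIntegral α ψ a (g k) t) (fracIntegral α ψ a (fun s => ∑' k, g k s) t) := by
  have hIcc {s : ℝ} (hs : s ∈ uIoc a t) : s ∈ Icc a t := Ioc_subset_Icc_self (uIoc_of_le hat ▸ hs)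
  refine HasSum.const_smul _ (intervalIntegral.hasSum_integral_of_dominated_convergence
    (fun k s => ‖fracKernel α ψ t s‖ * c k) (fun k => ?_) (fun k => ?_) ?_ ?_ ?_)
  · exact (intervalIntegrable_fracKernel_smul hα hat hmono hcont hdiff (hg k)).def'
      |>.aestronglyMeasurable
  · refine .of_forall fun s hs => ?_
    rw [norm_smul]
    exact mul_le_mul_of_nonneg_left (hgc k s (hIcc hs)) (norm_nonneg _)
  · exact .of_forall fun s _ => hc.mul_left _
  · simp only [tsum_mul_left]
    exact (intervalIntegrable_fracKernel hα hat hmono hcont hdiff).norm.mul_const _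
  · refine .of_forall fun s hs => HasSum.const_smul _ (Summable.hasSum ?_)
    exact .of_norm_bounded hc fun k => hgc k s (hIcc hs)

theorem fracIntegral_rpow (hα : 0 < α) (hβ : 0 ≤ β) (hat : a ≤ t) (hmono : MonotoneOn ψ (Icc a t))
    (hcont : ContinuousOn ψ (Icc a t)) (hdiff : DifferentiableOn ℝ ψ (Ioo a t)) :
    fracIntegral α ψ a (fun s => (ψ s - ψ a) ^ β) t =
      Real.Gamma (β + 1) / Real.Gamma (α + β + 1) * (ψ t - ψ a) ^ (α + β) := by
  have hsubst : ∫ s in a..t, fracKernel α ψ t s • (ψ s - ψ a) ^ β =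
      ∫ x in 0..ψ t - ψ a, x ^ (β + 1 - 1) * (ψ t - ψ a - x) ^ (α - 1) := by
    rw [integral_fracKernel_smul_comp hat hmono hcont hdiff fun u => (u - ψ a) ^ β,
      ← sub_self (ψ a), ← intervalIntegral.integral_comp_sub_right]
    simp only [smul_eq_mul, sub_sub_sub_cancel_right, add_sub_cancel_right, mul_comm]
  have hΓ : Real.Gamma α ≠ 0 := (Real.Gamma_pos_of_pos hα).ne'
  have hT : 0 ≤ ψ t - ψ a :=
    sub_nonneg.2 (hmono (left_mem_Icc.2 hat) (right_mem_Icc.2 hat) hat)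
  rw [fracIntegral, hsubst]
  rcases hT.eq_or_lt with hT | hT
  · simp [← hT, Real.zero_rpow (by positivity : α + β ≠ 0)]
  · rw [integral_rpow_mul_sub_rpow (by positivity) hα hT, smul_eq_mul,
      show β + 1 + α = α + β + 1 by ring, add_sub_cancel_right]
    field_simp

theorem fracIntegral_ML_term (hα : 0 < α) (hξ : ξ ≠ 0) (hat : a ≤ t)
    (hmono : MonotoneOn ψ (Icc a t)) (hcont : ContinuousOn ψ (Icc a t))
    (hdiff : DifferentiableOn ℝ ψ (Ioo a t)) (k : ℕ) :
    fracIntegral α ψ a (fun s => (ξ * (ψ s - ψ a) ^ α) ^ k / Real.Gamma (α * k + 1)) t =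
      ξ⁻¹ * ((ξ * (ψ t - ψ a) ^ α) ^ (k + 1) / Real.Gamma (α * ↑(k + 1) + 1)) := by
  have hrpow {s : ℝ} (hs : s ∈ Icc a t) (m : ℕ) :
      (ξ * (ψ s - ψ a) ^ α) ^ m = ξ ^ m * (ψ s - ψ a) ^ (α * m) := by
    rw [mul_pow, Real.rpow_mul_natCast (sub_nonneg.2 (hmono (left_mem_Icc.2 hat) hs hs.1))]
  have hΓ : Real.Gamma (α * k + 1) ≠ 0 := (Gamma_mul_natCast_add_one_pos hα.le k).ne'
  calc fracIntegral α ψ a (fun s => (ξ * (ψ s - ψ a) ^ α) ^ k / Real.Gamma (α * k + 1)) t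
      = fracIntegral α ψ a
          (fun s => (ξ ^ k / Real.Gamma (α * k + 1)) • (ψ s - ψ a) ^ (α * k)) t :=
        fracIntegral_congr hat fun s hs => by simp only [hrpow hs, smul_eq_mul, mul_div_right_comm]
    _ = ξ ^ k / Real.Gamma (α * k + 1) *
          (Real.Gamma (α * k + 1) / Real.Gamma (α + α * k + 1) *
            (ψ t - ψ a) ^ (α + α * k)) := by
        rw [fracIntegral_smul, fracIntegral_rpow hα (by positivity) hat hmono hcont hdiff,
          smul_eq_mul]
    _ = ξ ^ k * ((ψ t - ψ a) ^ (α + α * k) / Real.Gamma (α + α * k + 1)) := by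
        rw [← mul_assoc, div_mul_div_cancel₀ hΓ, div_mul_eq_mul_div, mul_div_assoc]
    _ = ξ⁻¹ * ((ξ * (ψ t - ψ a) ^ α) ^ (k + 1) / Real.Gamma (α * ↑(k + 1) + 1)) := by
        rw [hrpow (right_mem_Icc.2 hat), show α + α * k = α * ↑(k + 1) by push_cast; ring]
        field_simp
        ring

theorem fracIntegral_ML (hα : 0 < α) (hξ : ξ ≠ 0) (hat : a ≤ t)
    (hmono : MonotoneOn ψ (Icc a t)) (hcont : ContinuousOn ψ (Icc a t))
    (hdiff : DifferentiableOn ℝ ψ (Ioo a t)) :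
    fracIntegral α ψ a (fun s => ML α (ξ * (ψ s - ψ a) ^ α)) t =
      ξ⁻¹ * (ML α (ξ * (ψ t - ψ a) ^ α) - 1) := by
  have hterm_cont (k : ℕ) : ContinuousOn
      (fun s => (ξ * (ψ s - ψ a) ^ α) ^ k / Real.Gamma (α * k + 1)) (Icc a t) :=
    ((((hcont.sub continuousOn_const).rpow_const fun _ _ => .inr hα.le).const_mul ξ).pow k
      |>.div_const _)
  have hterm_bound (k : ℕ) : ∀ s ∈ Icc a t,
      ‖(ξ * (ψ s - ψ a) ^ α) ^ k / Real.Gamma (α * k + 1)‖ ≤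
        (|ξ| * (ψ t - ψ a) ^ α) ^ k / Real.Gamma (α * k + 1) := by
    intro s hs
    have hs0 : 0 ≤ ψ s - ψ a := sub_nonneg.2 (hmono (left_mem_Icc.2 hat) hs hs.1)
    have hst : ψ s ≤ ψ t := hmono hs (right_mem_Icc.2 hat) hs.2
    have hΓ := Gamma_mul_natCast_add_one_pos hα.le k
    rw [norm_div, norm_pow, norm_mul, Real.norm_eq_abs, Real.norm_of_nonneg hΓ.le,
      Real.norm_of_nonneg (Real.rpow_nonneg hs0 α)]
    gcongr
  have hsum := hasSum_fracIntegral hα hat hmono hcont hdiff hterm_cont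
    (summable_ML hα (|ξ| * (ψ t - ψ a) ^ α)) hterm_bound
  simp only [fracIntegral_ML_term hα hξ hat hmono hcont hdiff] at hsum
  rw [ML_eq_one_add_tsum hα, add_sub_cancel_left, ← tsum_mul_left]
  exact hsum.tsum_eq.symm

theorem norm_fracIntegral_le_of_norm_le_ML (hα : 0 < α) (hξ : 0 < ξ) (hat : a ≤ t)
    (hmono : MonotoneOn ψ (Icc a t)) (hcont : ContinuousOn ψ (Icc a t))
    (hdiff : DifferentiableOn ℝ ψ (Ioo a t)) {g : ℝ → E} {C : ℝ}
    (hg : ∀ s ∈ Icc a t, ‖g s‖ ≤ C * ML α (ξ * (ψ s - ψ a) ^ α)) :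
    ‖fracIntegral α ψ a g t‖ ≤ C / ξ * (ML α (ξ * (ψ t - ψ a) ^ α) - 1) := by
  have hweight : ContinuousOn (fun s => ML α (ξ * (ψ s - ψ a) ^ α)) (Icc a t) :=
    (continuous_ML hα).comp_continuousOn
      (((hcont.sub continuousOn_const).rpow_const fun _ _ => .inr hα.le).const_mul ξ)
  calc ‖fracIntegral α ψ a g t‖
      ≤ fracIntegral α ψ a (fun s => C • ML α (ξ * (ψ s - ψ a) ^ α)) t :=
        norm_fracIntegral_le hα hat hmono hcont hdiff (hweight.const_smul C) hg
    _ = C / ξ * (ML α (ξ * (ψ t - ψ a) ^ α) - 1) := by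
        rw [fracIntegral_smul, fracIntegral_ML hα hξ.ne' hat hmono hcont hdiff, smul_eq_mul,
          div_eq_mul_inv, mul_assoc]

end FractionalIntegral

section WeightedNorm

variable {n : ℕ} {a b α ξ : ℝ} {ψ : ℝ → ℝ} {x : ℝ → EuclideanSpace ℝ (Fin n)}

theorem one_le_ML_weight (hα : 0 < α) (hξ : 0 ≤ ξ) (hmono : MonotoneOn ψ (Icc a b)) {t : ℝ}
    (ht : t ∈ Icc a b) : 1 ≤ ML α (ξ * (ψ t - ψ a) ^ α) :=
  one_le_ML hα <| mul_nonneg hξ <| Real.rpow_nonneg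
    (sub_nonneg.2 (hmono (left_mem_Icc.2 (ht.1.trans ht.2)) ht ht.1)) α

theorem nXi_nonneg (hα : 0 < α) (hξ : 0 ≤ ξ) (hmono : MonotoneOn ψ (Icc a b)) :
    0 ≤ nXi a b ξ α ψ x :=
  Real.iSup_nonneg fun t =>
    div_nonneg (norm_nonneg _) (zero_le_one.trans (one_le_ML_weight hα hξ hmono t.2))

theorem norm_le_nXi_mul_ML (hα : 0 < α) (hξ : 0 ≤ ξ) (hmono : MonotoneOn ψ (Icc a b))
    (hx : BddAbove ((fun t => ‖x t‖ / ML α (ξ * (ψ t - ψ a) ^ α)) '' Icc a b)) {t : ℝ}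
    (ht : t ∈ Icc a b) : ‖x t‖ ≤ nXi a b ξ α ψ x * ML α (ξ * (ψ t - ψ a) ^ α) := by
  rw [image_eq_range] at hx
  exact (div_le_iff₀ (one_pos.trans_le (one_le_ML_weight hα hξ hmono ht))).1 (le_ciSup hx ⟨t, ht⟩)

theorem nXi_le_of_norm_le_mul_ML (hα : 0 < α) (hab : a ≤ b) (hξ : 0 ≤ ξ)
    (hmono : MonotoneOn ψ (Icc a b)) {C : ℝ}
    (hx : ∀ t ∈ Icc a b, ‖x t‖ ≤ C * ML α (ξ * (ψ t - ψ a) ^ α)) : nXi a b ξ α ψ x ≤ C := by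
  have : Nonempty (Icc a b) := ⟨⟨a, left_mem_Icc.2 hab⟩⟩
  exact ciSup_le fun t =>
    (div_le_iff₀ (one_pos.trans_le (one_le_ML_weight hα hξ hmono t.2))).2 (hx t t.2)

theorem bddAbove_image_norm_div_ML (hα : 0 < α) (hξ : 0 ≤ ξ) (hmono : MonotoneOn ψ (Icc a b))
    (hx : ContinuousOn x (Icc a b)) :
    BddAbove ((fun t => ‖x t‖ / ML α (ξ * (ψ t - ψ a) ^ α)) '' Icc a b) := by
  obtain ⟨C, hC⟩ := isCompact_Icc.exists_bound_of_continuousOn hx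
  refine ⟨C, forall_mem_image.2 fun t ht => ?_⟩
  exact (div_le_self (norm_nonneg _) (one_le_ML_weight hα hξ hmono ht)).trans (hC t ht)

end WeightedNorm

section Volterra

variable {n : ℕ} {a b α L M ξ : ℝ} {ψ : ℝ → ℝ}
  {k : ℝ → ℝ → EuclideanSpace ℝ (Fin n) → EuclideanSpace ℝ (Fin n)}
  {x : ℝ → EuclideanSpace ℝ (Fin n)}

theorem volterraK_eq_fracIntegral (t : ℝ) :
    volterraK α ψ a k x t = fracIntegral α ψ a (fun s => k t s (x s)) t :=
  rfl

theorem norm_volterraK_sub_le {t N : ℝ} {y : ℝ → EuclideanSpace ℝ (Fin n)} (hα : 0 < α)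
    (hat : a ≤ t) (hmono : MonotoneOn ψ (Icc a t)) (hcont : ContinuousOn ψ (Icc a t))
    (hdiff : DifferentiableOn ℝ ψ (Ioo a t)) (hL : 0 ≤ L) (hN : 0 ≤ N) (hξ : 0 < ξ)
    (hk : ContinuousOn (fun p : ℝ × EuclideanSpace ℝ (Fin n) => k t p.1 p.2) (Icc a t ×ˢ univ))
    (hkLip : ∀ s ∈ Icc a t, ∀ u u', ‖k t s u - k t s u'‖ ≤ L * ‖u - u'‖)
    (hx : ContinuousOn x (Icc a t)) (hy : ContinuousOn y (Icc a t))
    (hxy : ∀ s ∈ Icc a t, ‖x s - y s‖ ≤ N * ML α (ξ * (ψ s - ψ a) ^ α)) :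
    ‖volterraK α ψ a k x t - volterraK α ψ a k y t‖ ≤
      L / ξ * (N * ML α (ξ * (ψ t - ψ a) ^ α)) := by
  have hcomp {z : ℝ → EuclideanSpace ℝ (Fin n)} (hz : ContinuousOn z (Icc a t)) :
      ContinuousOn (fun s => k t s (z s)) (Icc a t) :=
    hk.comp (continuousOn_id.prodMk hz) fun s hs => ⟨hs, mem_univ _⟩
  have hdiffk : ∀ s ∈ Icc a t,
      ‖k t s (x s) - k t s (y s)‖ ≤ L * N * ML α (ξ * (ψ s - ψ a) ^ α) := fun s hs =>
    calc ‖k t s (x s) - k t s (y s)‖ ≤ L * ‖x s - y s‖ := hkLip s hs _ _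
      _ ≤ L * (N * ML α (ξ * (ψ s - ψ a) ^ α)) := by gcongr; exact hxy s hs
      _ = L * N * ML α (ξ * (ψ s - ψ a) ^ α) := by ring
  rw [volterraK_eq_fracIntegral, volterraK_eq_fracIntegral,
    ← fracIntegral_sub hα hat hmono hcont hdiff (hcomp hx) (hcomp hy)]
  calc ‖fracIntegral α ψ a (fun s => k t s (x s) - k t s (y s)) t‖
      ≤ L * N / ξ * (ML α (ξ * (ψ t - ψ a) ^ α) - 1) :=
        norm_fracIntegral_le_of_norm_le_ML hα hξ hat hmono hcont hdiff hdiffk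
    _ ≤ L * N / ξ * ML α (ξ * (ψ t - ψ a) ^ α) := by gcongr; exact sub_le_self _ zero_le_one
    _ = L / ξ * (N * ML α (ξ * (ψ t - ψ a) ^ α)) := by ring

theorem volterra_operator_norm_bound_general
    {f : ℝ → EuclideanSpace ℝ (Fin n) → EuclideanSpace ℝ (Fin n) → EuclideanSpace ℝ (Fin n)}
    (hα : 0 < α) (hab : a ≤ b) (hmono : MonotoneOn ψ (Icc a b)) (hcont : ContinuousOn ψ (Icc a b))
    (hdiff : DifferentiableOn ℝ ψ (Ioo a b)) (hL : 0 ≤ L) (hM : 0 ≤ M) (hξ : 0 < ξ)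
    (hk : ∀ t ∈ Icc a b,
      ContinuousOn (fun p : ℝ × EuclideanSpace ℝ (Fin n) => k t p.1 p.2) (Icc a t ×ˢ univ))
    (hfLip : ∀ t ∈ Icc a b, ∀ u v u' v',
      ‖f t u v - f t u' v'‖ ≤ M * (‖u - u'‖ + ‖v - v'‖))
    (hkLip : ∀ t ∈ Icc a b, ∀ s ∈ Icc a t, ∀ u u', ‖k t s u - k t s u'‖ ≤ L * ‖u - u'‖)
    (hd1 : BddAbove ((fun t =>
      ‖f t 0 (volterraK α ψ a k (fun _ => 0) t)‖ / ML α (ξ * (ψ t - ψ a) ^ α)) '' Icc a b))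
    (hx : ContinuousOn x (Icc a b)) :
    nXi a b ξ α ψ (fun t => f t (x t) (volterraK α ψ a k x t))
      ≤ nXi a b ξ α ψ (fun t => f t 0 (volterraK α ψ a k (fun _ => 0) t))
        + M * (1 + L / ξ) * nXi a b ξ α ψ x := by
  refine nXi_le_of_norm_le_mul_ML hα hab hξ.le hmono fun t ht => ?_
  have hsub : Icc a t ⊆ Icc a b := Icc_subset_Icc_right ht.2
  have hx_le {s : ℝ} (hs : s ∈ Icc a b) :
      ‖x s‖ ≤ nXi a b ξ α ψ x * ML α (ξ * (ψ s - ψ a) ^ α) :=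
    norm_le_nXi_mul_ML hα hξ.le hmono (bddAbove_image_norm_div_ML hα hξ.le hmono hx) hs
  have hf0_le := norm_le_nXi_mul_ML hα hξ.le hmono hd1 ht
  have hK_le := norm_volterraK_sub_le (y := fun _ => 0) hα ht.1 (hmono.mono hsub)
    (hcont.mono hsub) (hdiff.mono (Ioo_subset_Ioo_right ht.2)) hL (nXi_nonneg hα hξ.le hmono) hξ
    (hk t ht) (hkLip t ht) (hx.mono hsub) continuousOn_const
    fun s hs => by simpa only [sub_zero] using hx_le (hsub hs)
  set E := ML α (ξ * (ψ t - ψ a) ^ α)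
  calc ‖f t (x t) (volterraK α ψ a k x t)‖
      ≤ ‖f t 0 (volterraK α ψ a k (fun _ => 0) t)‖
        + M * (‖x t - 0‖ + ‖volterraK α ψ a k x t - volterraK α ψ a k (fun _ => 0) t‖) :=
        (norm_le_norm_add_norm_sub' _ _).trans (by gcongr; exact hfLip t ht ..)
    _ ≤ nXi a b ξ α ψ (fun t => f t 0 (volterraK α ψ a k (fun _ => 0) t)) * E
        + M * (nXi a b ξ α ψ x * E + L / ξ * (nXi a b ξ α ψ x * E)) := by
        rw [sub_zero]
        gcongr
        exact hx_le ht
    _ = (nXi a b ξ α ψ (fun t => f t 0 (volterraK α ψ a k (fun _ => 0) t))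
        + M * (1 + L / ξ) * nXi a b ξ α ψ x) * E := by ring

end Volterra

theorem volterra_operator_norm_bound
    (n : ℕ) (a b α L M δ ξ : ℝ) (ψ : ℝ → ℝ)
    (f : ℝ → EuclideanSpace ℝ (Fin n) → EuclideanSpace ℝ (Fin n) → EuclideanSpace ℝ (Fin n))
    (k : ℝ → ℝ → EuclideanSpace ℝ (Fin n) → EuclideanSpace ℝ (Fin n))
    (hα0 : 0 < α) (hα1 : α ≤ 1) (hab : a ≤ b)
    (hmono : StrictMonoOn ψ (Icc a b)) (hC1 : ContDiffOn ℝ 1 ψ (Icc a b))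
    (hL : 0 < L) (hM : 0 ≤ M) (hδ : 1 < δ) (hξ : ξ = L * δ)
    (hf : Continuous fun p : ℝ × EuclideanSpace ℝ (Fin n) × EuclideanSpace ℝ (Fin n) =>
      f p.1 p.2.1 p.2.2)
    (hk : Continuous fun p : ℝ × ℝ × EuclideanSpace ℝ (Fin n) => k p.1 p.2.1 p.2.2)
    (hfLip : ∀ t u v u' v', ‖f t u v - f t u' v'‖ ≤ M * (‖u - u'‖ + ‖v - v'‖))
    (hkLip : ∀ t s u u', ‖k t s u - k t s u'‖ ≤ L * ‖u - u'‖)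
    (hd1 : BddAbove ((fun t =>
      ‖f t 0 (volterraK α ψ a k (fun _ => 0) t)‖ / ML α (ξ * (ψ t - ψ a) ^ α)) '' Icc a b))
    (x : ℝ → EuclideanSpace ℝ (Fin n)) (hx : ContinuousOn x (Icc a b)) :
    nXi a b ξ α ψ (fun t => f t (x t) (volterraK α ψ a k x t))
      ≤ nXi a b ξ α ψ (fun t => f t 0 (volterraK α ψ a k (fun _ => 0) t))
        + M * (1 + 1 / δ) * nXi a b ξ α ψ x := by
  have hL_div : L / ξ = 1 / δ := by rw [hξ]; field_simp
  exact hL_div ▸ volterra_operator_norm_bound_general hα0 hab hmono.monotoneOn hC1.continuousOn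
    ((hC1.differentiableOn one_ne_zero).mono Ioo_subset_Icc_self) hL.le hM (hξ ▸ by positivity)
    (fun t _ => (hk.comp (Continuous.prodMk_right t)).continuousOn) (fun t _ => hfLip t)
    (fun t _ s _ => hkLip t s) hd1 hx
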